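/- arXiv:1401.3636 — 2 statements merged into one kernel-verified Lean document; each statement's English description precedes it below -/
import Mathlib

section
/- Let x be a real number and let a be a complex number such that a, a+1/2 (and hence all Pochhammer denominators (a)_k, (a+1/2)_k) are nonzero for all k, i.e. a and a+1/2 are not nonpositive integers or zero. Then Σ_{k=0}^∞ (x/4)^{2k} H_{2k}(x/2) / ((a+1/2)_k k!) = e^{x²/4} · Σ_{k=0}^∞ (a/2)_k ((a+1)/2)_k (−x²)^k / ((a)_k (a+1/2)_k k!). -/
/-- The Pochhammer symbol `(a)_k = a (a+1) ⋯ (a+k-1)`. -/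
noncomputable def poch (a : ℂ) (k : ℕ) : ℂ := Polynomial.eval a (ascPochhammer ℂ k)

/-- The physicists' Hermite polynomial `H_n(t) = (-1)^n e^{t²} (d/dt)^n e^{-t²}`. -/
noncomputable def physHermite (n : ℕ) (t : ℝ) : ℝ :=
  (-1 : ℝ) ^ n * Real.exp (t ^ 2) * iteratedDeriv n (fun s => Real.exp (-(s ^ 2))) t

open Polynomial in
lemma poch_succ (c : ℂ) (k : ℕ) : poch c (k + 1) = poch c k * (c + k) :=
  ascPochhammer_succ_eval k c

lemma poch_zero (c : ℂ) : poch c 0 = 1 := by simp [poch]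

lemma poch_ne_zero (c : ℂ) (hc : ∀ n : ℕ, c ≠ -(n : ℂ)) (k : ℕ) : poch c k ≠ 0 := by
  induction k with
  | zero => simp [poch_zero]
  | succ k ih =>
    rw [poch_succ]
    refine mul_ne_zero ih fun h => hc k ?_
    linear_combination h

/-- Ratios of Pochhammer symbols grow at most geometrically. -/
lemma poch_ratio_bound (c d : ℂ) (hd : ∀ n : ℕ, d ≠ -(n : ℂ)) :
    ∃ K : ℝ, 0 ≤ K ∧ ∀ k, ‖poch c k / poch d k‖ ≤ K ^ k := by
  have hne : ∀ n : ℕ, d + n ≠ 0 := fun n h => hd n (by linear_combination h)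
  have hb : ∃ K : ℝ, ∀ n : ℕ, ‖(c + n) / (d + n)‖ ≤ K := by
    have h1 : Filter.Tendsto (fun n : ℕ => ‖d + n‖) Filter.atTop Filter.atTop := by
      have h0 : Filter.Tendsto (fun n : ℕ => (n : ℝ) - ‖d‖) Filter.atTop Filter.atTop :=
        Filter.tendsto_atTop_add_const_right _ _ tendsto_natCast_atTop_atTop
      refine Filter.tendsto_atTop_mono (fun n => ?_) h0
      have := norm_sub_le (d + n) d
      simp only [add_sub_cancel_left, Complex.norm_natCast] at this
      linarith
    have h2 : Filter.Tendsto (fun n : ℕ => ((c - d) / (d + n) : ℂ)) Filter.atTop (nhds 0) := by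
      rw [tendsto_zero_iff_norm_tendsto_zero]
      simp only [norm_div]
      exact Filter.Tendsto.div_atTop tendsto_const_nhds h1
    have h3 : Filter.Tendsto (fun n : ℕ => ‖(c + n) / (d + n)‖) Filter.atTop (nhds ‖(1 + 0 : ℂ)‖) := by
      refine ((tendsto_const_nhds (x := (1 : ℂ))).add h2).norm.congr fun n => ?_
      congr 1
      have := hne n
      field_simp
      ring
    obtain ⟨K, hK⟩ := h3.bddAbove_range
    exact ⟨K, fun n => hK ⟨n, rfl⟩⟩
  obtain ⟨K, hK⟩ := hb
  have hK0 : 0 ≤ K := (norm_nonneg _).trans (hK 0)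
  refine ⟨K, hK0, fun k => ?_⟩
  induction k with
  | zero => simp [poch_zero]
  | succ k ih =>
    rw [poch_succ, poch_succ, mul_div_mul_comm, norm_mul, pow_succ]
    exact mul_le_mul ih (hK k) (norm_nonneg _) (by positivity)

lemma factorial_two_mul_poch (k : ℕ) :
    ((2 * k).factorial : ℂ) = 4 ^ k * k.factorial * poch (1 / 2) k := by
  induction k with
  | zero => simp [poch_zero]
  | succ k ih =>
    rw [show 2 * (k + 1) = 2 * k + 1 + 1 by ring, Nat.factorial_succ, Nat.factorial_succ,
      Nat.factorial_succ, poch_succ]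
    push_cast
    rw [ih]
    ring

lemma poch_dup (a : ℂ) (k : ℕ) : poch a (2 * k) = 4 ^ k * poch (a / 2) k * poch ((a + 1) / 2) k := by
  induction k with
  | zero => simp [poch_zero]
  | succ k ih =>
    rw [show 2 * (k + 1) = 2 * k + 1 + 1 by ring, poch_succ, poch_succ, poch_succ, poch_succ, ih]
    push_cast
    ring

/-- Moments of the symmetric beta weight `(1 - s²)^(a-1)`. -/
noncomputable def mom (a : ℂ) (n : ℕ) : ℂ :=
  if Even n then poch (1 / 2) (n / 2) / poch (a + 1 / 2) (n / 2) else 0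

lemma mom_even (a : ℂ) (k : ℕ) : mom a (2 * k) = poch (1 / 2) k / poch (a + 1 / 2) k := by
  simp [mom]

lemma mom_odd (a : ℂ) (k : ℕ) : mom a (2 * k + 1) = 0 := by
  simp [mom]

noncomputable def momL (a : ℂ) : Polynomial ℂ →ₗ[ℂ] ℂ :=
  (Polynomial.basisMonomials ℂ).constr ℂ (mom a)

open Polynomial in
lemma momL_X_pow (a : ℂ) (n : ℕ) : momL a (X ^ n) = mom a n := by
  have := (Polynomial.basisMonomials ℂ).constr_basis ℂ (mom a) n
  rw [coe_basisMonomials] at this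
  rw [← monomial_one_right_eq_X_pow]
  exact this

lemma mom_rec (a : ℂ) (ha1 : ∀ n : ℕ, a + 1 / 2 ≠ -(n : ℂ)) (j : ℕ) :
    ((j + 1 : ℕ) : ℂ) * mom a j = (j + 1 + 2 * a) * mom a (j + 2) := by
  rcases Nat.even_or_odd' j with ⟨k, rfl | rfl⟩
  · rw [show 2 * k + 2 = 2 * (k + 1) by ring, mom_even, mom_even, poch_succ, poch_succ]
    have h1 := poch_ne_zero _ ha1 k
    have h2 : a + 1 / 2 + k ≠ 0 := fun h => ha1 k (by linear_combination h)
    push_cast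
    rw [mul_div_assoc', mul_div_assoc', div_eq_div_iff h1 (mul_ne_zero h1 h2)]
    ring
  · rw [show 2 * k + 1 + 2 = 2 * (k + 1) + 1 by ring, mom_odd, mom_odd]
    simp

open Polynomial in
lemma momL_parts (a : ℂ) (ha1 : ∀ n : ℕ, a + 1 / 2 ≠ -(n : ℂ)) (p : ℂ[X]) :
    momL a ((1 - X ^ 2) * derivative p - C (2 * a) * (X * p)) = 0 := by
  induction p using Polynomial.induction_on' with
  | add p q hp hq =>
    rw [← add_zero (0 : ℂ)]
    nth_rewrite 1 [← hp]
    rw [← hq, ← map_add]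
    congr 1
    simp only [derivative_add]
    ring
  | monomial n c =>
    rw [← C_mul_X_pow_eq_monomial]
    rcases n with _ | n
    · have : ((1 - X ^ 2) * derivative (C c * X ^ 0) - C (2 * a) * (X * (C c * X ^ 0)) : ℂ[X])
        = (-(2 * a * c)) • X ^ (2 * 0 + 1) := by
        rw [smul_eq_C_mul]
        simp
        ring
      rw [this, map_smul, momL_X_pow, mom_odd, smul_zero]
    · have : ((1 - X ^ 2) * derivative (C c * X ^ (n + 1)) - C (2 * a) * (X * (C c * X ^ (n + 1))) : ℂ[X])
        = c • (((n + 1 : ℕ) : ℂ) • X ^ n - ((n : ℂ) + 1 + 2 * a) • X ^ (n + 2)) := by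
        simp only [smul_eq_C_mul, derivative_mul, derivative_C, derivative_X_pow, zero_mul, zero_add]
        simp only [map_add, map_mul, map_one, map_natCast, Nat.cast_add, Nat.cast_one]
        simp only [Nat.add_sub_cancel]
        ring
      rw [this, map_smul, map_sub, map_smul, map_smul, momL_X_pow, momL_X_pow, smul_eq_mul,
        smul_eq_mul, smul_eq_mul, mom_rec a ha1, sub_self, mul_zero]

open Polynomial in
lemma momL_one_sub_rec (a : ℂ) (ha1 : ∀ n : ℕ, a + 1 / 2 ≠ -(n : ℂ)) (j : ℕ) :
    (2 * a + j) * momL a ((1 - X) ^ (j + 1)) = 2 * (a + j) * momL a ((1 - X) ^ j) := by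
  have h := momL_parts a ha1 ((1 - X) ^ j)
  have : ((1 - X ^ 2) * derivative ((1 - X) ^ j) - C (2 * a) * (X * (1 - X) ^ j) : ℂ[X])
      = (2 * a + j) • (1 - X) ^ (j + 1) - (2 * (a + j)) • (1 - X) ^ j := by
    rcases j with _ | j
    · simp only [smul_eq_C_mul, map_add, map_mul]
      simp
      ring
    · simp only [smul_eq_C_mul, derivative_pow, map_add, map_mul, map_natCast]
      simp only [derivative_sub, derivative_one, derivative_X, Nat.add_sub_cancel]
      simp only [map_ofNat]
      push_cast
      ring
  rw [this, map_sub, map_smul, map_smul, smul_eq_mul, smul_eq_mul] at h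
  linear_combination h

lemma poch_dup2 (a : ℂ) (k : ℕ) : poch (2 * a) (2 * k) = 4 ^ k * poch a k * poch (a + 1 / 2) k := by
  rw [poch_dup]
  congr 2
  · congr 1; ring
  · ring

open Polynomial in
lemma momL_one_sub (a : ℂ)
    (ha1 : ∀ n : ℕ, a + 1 / 2 ≠ -(n : ℂ)) (j : ℕ) :
    poch (2 * a) j * momL a ((1 - X) ^ j) = 2 ^ j * poch a j := by
  induction j with
  | zero =>
    have := momL_X_pow a (2 * 0)
    rw [mom_even] at this
    simp [poch_zero] at this ⊢
    exact this
  | succ j ih =>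
    rw [poch_succ, poch_succ, mul_assoc, momL_one_sub_rec a ha1]
    linear_combination 2 * (a + j) * ih

open Polynomial in
lemma momL_one_sub_even (a : ℂ) (ha : ∀ n : ℕ, a ≠ -(n : ℂ))
    (ha1 : ∀ n : ℕ, a + 1 / 2 ≠ -(n : ℂ)) (k : ℕ) :
    momL a ((1 - X) ^ (2 * k)) =
      4 ^ k * (poch (a / 2) k * poch ((a + 1) / 2) k / (poch a k * poch (a + 1 / 2) k)) := by
  have h := momL_one_sub a ha1 (2 * k)
  rw [poch_dup2, poch_dup] at h
  have h1 := poch_ne_zero _ ha k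
  have h2 := poch_ne_zero _ ha1 k
  rw [pow_mul (2 : ℂ), show (2 : ℂ) ^ 2 = 4 by norm_num] at h
  rw [mul_div_assoc', eq_div_iff (mul_ne_zero h1 h2)]
  have h4 : (4 : ℂ) ^ k ≠ 0 := pow_ne_zero _ (by norm_num)
  apply mul_left_cancel₀ h4
  linear_combination h

open Polynomial in
/-- The coefficient identity. -/
lemma coeff_identity (a : ℂ) (ha : ∀ n : ℕ, a ≠ -(n : ℂ))
    (ha1 : ∀ n : ℕ, a + 1 / 2 ≠ -(n : ℂ)) (n : ℕ) :
    ∑ p ∈ Finset.HasAntidiagonal.antidiagonal n, (-1 : ℂ) ^ p.1 * 2 ^ p.2 * mom a (2 * p.1 + p.2) /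
        (p.1.factorial * p.2.factorial) =
    ∑ p ∈ Finset.HasAntidiagonal.antidiagonal n, (-4 : ℂ) ^ p.2 * (poch (a / 2) p.2 * poch ((a + 1) / 2) p.2 /
        (poch a p.2 * poch (a + 1 / 2) p.2)) / (p.1.factorial * p.2.factorial) := by
  have key : ∀ p ∈ Finset.HasAntidiagonal.antidiagonal n, (n.factorial : ℂ) / (p.1.factorial * p.2.factorial)
      = n.choose p.1 := by
    rintro ⟨i, j⟩ hp
    rw [Finset.HasAntidiagonal.mem_antidiagonal] at hp
    simp only at hp
    subst hp
    rw [Nat.cast_add_choose]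
  have hn : (n.factorial : ℂ) ≠ 0 := by exact_mod_cast n.factorial_ne_zero
  apply mul_left_cancel₀ hn
  have e1 : momL a ((-X ^ 2 + 2 * X) ^ n) = momL a ((1 + -(1 - X) ^ 2) ^ n) := by
    congr 2; ring
  rw [(Commute.all _ _).add_pow', (Commute.all _ _).add_pow', map_sum, map_sum] at e1
  rw [Finset.mul_sum, Finset.mul_sum]
  refine Eq.trans (Finset.sum_congr rfl ?_) (e1.trans (Finset.sum_congr rfl ?_))
  · rintro ⟨i, j⟩ hp
    have hk := key _ hp
    simp only at hk ⊢
    have : ((-X ^ 2) ^ i * (2 * X) ^ j : ℂ[X]) = ((-1) ^ i * 2 ^ j : ℂ) • X ^ (2 * i + j) := by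
      rw [smul_eq_C_mul, neg_pow, mul_pow]
      simp only [map_mul, map_pow, map_neg, map_one, map_ofNat]
      ring
    rw [this, map_nsmul, map_smul, momL_X_pow, nsmul_eq_mul, smul_eq_mul, ← hk]
    ring
  · rintro ⟨i, j⟩ hp
    have hk := key _ hp
    simp only at hk ⊢
    have : (1 ^ i * (-(1 - X) ^ 2) ^ j : ℂ[X]) = ((-1) ^ j : ℂ) • (1 - X) ^ (2 * j) := by
      rw [smul_eq_C_mul, neg_pow, pow_mul]
      simp
    rw [this, map_nsmul, map_smul, momL_one_sub_even a ha ha1, nsmul_eq_mul, smul_eq_mul, ← hk,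
      show (-4 : ℂ) = (-1) * 4 by norm_num, mul_pow]
    ring

open Polynomial in
lemma physHermite_eq (n : ℕ) (t : ℝ) :
    physHermite n t = √2 ^ n * aeval (√2 * t) (hermite n) := by
  have hs : √2 ^ 2 = (2 : ℝ) := Real.sq_sqrt (by norm_num)
  have h1 : (fun s : ℝ => Real.exp (-(s ^ 2))) =
      fun s => (fun y : ℝ => Real.exp (-(y ^ 2 / 2))) (√2 * s) := by
    funext s
    simp only [mul_pow, hs]
    congr 1
    ring
  have hc : ContDiff ℝ n (fun y : ℝ => Real.exp (-(y ^ 2 / 2))) := by fun_prop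
  rw [physHermite, h1, iteratedDeriv_comp_const_mul hc, iteratedDeriv_eq_iterate]
  simp only
  rw [deriv_gaussian_eq_hermite_mul_gaussian, mul_pow, hs, show 2 * t ^ 2 / 2 = t ^ 2 by ring,
    Real.exp_neg]
  have := Real.exp_ne_zero (t ^ 2)
  have h2 : ((-1 : ℝ) ^ n) * (-1) ^ n = 1 := by rw [← mul_pow]; simp
  have h3 : Real.exp (t ^ 2) * (Real.exp (t ^ 2))⁻¹ = 1 := mul_inv_cancel₀ this
  generalize aeval (√2 * t) (hermite n) = A
  linear_combination √2 ^ n * A * ((-1) ^ n * (-1) ^ n) * h3 + √2 ^ n * A * h2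

lemma even_range_sum (f : ℕ → ℝ) (k : ℕ) (hf : ∀ i, f (2 * i + 1) = 0) :
    ∑ i ∈ Finset.range (2 * k + 1), f i = ∑ i ∈ Finset.range (k + 1), f (2 * i) := by
  induction k with
  | zero => simp
  | succ k ih =>
    rw [show 2 * (k + 1) + 1 = 2 * k + 1 + 1 + 1 by ring, Finset.sum_range_succ,
      Finset.sum_range_succ, ih, hf, Finset.sum_range_succ _ (k + 1)]
    simp [mul_add]

open Polynomial in
lemma physHermite_even (k : ℕ) (t : ℝ) :
    physHermite (2 * k) t = ∑ p ∈ Finset.HasAntidiagonal.antidiagonal k,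
      (-1 : ℝ) ^ p.1 * (2 * k).factorial * (2 * t) ^ (2 * p.2) /
        (p.1.factorial * (2 * p.2).factorial) := by
  have hs : √2 ^ 2 = (2 : ℝ) := Real.sq_sqrt (by norm_num)
  rw [physHermite_eq, aeval_eq_sum_range, natDegree_hermite, even_range_sum,
    ← Finset.Nat.sum_antidiagonal_eq_sum_range_succ_mk
      (f := fun p => coeff (hermite (2 * k)) (2 * p.1) • (√2 * t) ^ (2 * p.1)),
    ← Finset.Nat.sum_antidiagonal_swap, Finset.mul_sum]
  · refine Finset.sum_congr rfl ?_
    rintro ⟨j, i⟩ hp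
    rw [Finset.HasAntidiagonal.mem_antidiagonal] at hp
    simp only [Prod.fst_swap] at hp ⊢
    subst hp
    rw [show 2 * (j + i) = 2 * j + 2 * i by ring, coeff_hermite_explicit, zsmul_eq_mul]
    push_cast
    rw [Nat.choose_symm_add.symm, Nat.cast_add_choose]
    have h1 : ((2 * j).factorial : ℝ) = 2 ^ j * j.factorial * (2 * j - 1).doubleFactorial := by
      rcases j with _ | j
      · simp
      · have := Nat.factorial_eq_mul_doubleFactorial (2 * j + 1)
        rw [show 2 * j + 1 + 1 = 2 * (j + 1) by ring, Nat.doubleFactorial_two_mul] at this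
        rw [this]
        push_cast
        rfl
    have hd : ((2 * j - 1).doubleFactorial : ℝ) ≠ 0 := by
      exact_mod_cast (Nat.doubleFactorial_pos _).ne'
    rw [h1, ← mul_add, pow_mul, hs, mul_pow, pow_mul √2, hs, mul_pow, pow_mul (2 : ℝ) 2, pow_add]
    have h4 : (2 ^ 2 : ℝ) ^ i = 2 ^ i * 2 ^ i := by rw [← mul_pow]; norm_num
    rw [h4]
    field_simp
  · intro i
    rw [coeff_hermite_of_odd_add, zero_smul]
    exact ⟨k + i, by ring⟩

/-- The double series. -/
noncomputable def dterm (a y : ℂ) (p : ℕ × ℕ) : ℂ :=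
  (-1 : ℂ) ^ p.1 * 2 ^ p.2 * mom a (2 * p.1 + p.2) / (p.1.factorial * p.2.factorial) *
    (y / 4) ^ (p.1 + p.2)

lemma summable_dterm_even (a y : ℂ) (ha1 : ∀ n : ℕ, a + 1 / 2 ≠ -(n : ℂ)) :
    Summable fun p : ℕ × ℕ => dterm a y (p.1, 2 * p.2) := by
  obtain ⟨K, hK0, hK⟩ := poch_ratio_bound (1 / 2) (a + 1 / 2) ha1
  have hs := (Real.summable_pow_div_factorial (K * ‖y / 4‖)).mul_of_nonneg
    (Real.summable_pow_div_factorial (4 * K * ‖y / 4‖ ^ 2))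
    (fun n => by positivity) (fun n => by positivity)
  refine Summable.of_norm_bounded hs ?_
  rintro ⟨j, i⟩
  simp only [dterm]
  rw [← mul_add, mom_even]
  simp only [norm_mul, norm_div, norm_pow, norm_neg, norm_one, one_pow, one_mul,
    Complex.norm_natCast, Complex.norm_ofNat]
  have h1 := hK (j + i)
  rw [norm_div] at h1
  have h2 : (i.factorial : ℝ) ≤ (2 * i).factorial := by
    exact_mod_cast Nat.factorial_le (by omega)
  have hi : (0 : ℝ) < i.factorial := by exact_mod_cast i.factorial_pos
  calc _ ≤ 2 ^ (2 * i) * K ^ (j + i) / (j.factorial * i.factorial) *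
        (‖y‖ / 4) ^ (j + 2 * i) := by gcongr
    _ = _ := by
      rw [pow_mul (2 : ℝ), show (2 : ℝ) ^ 2 = 4 by norm_num, pow_add, pow_add, mul_pow, mul_pow,
        mul_pow, ← pow_mul]
      ring

lemma two_mul_inj : Function.Injective (fun p : ℕ × ℕ => (p.1, 2 * p.2)) := by
  rintro ⟨a, b⟩ ⟨c, d⟩ h
  simp only [Prod.mk.injEq] at h ⊢
  omega

lemma dterm_odd (a y : ℂ) (p : ℕ × ℕ) (hp : p ∉ Set.range (fun p : ℕ × ℕ => (p.1, 2 * p.2))) :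
    dterm a y p = 0 := by
  obtain ⟨j, l⟩ := p
  rcases Nat.even_or_odd' l with ⟨k, rfl | rfl⟩
  · exact absurd ⟨(j, k), rfl⟩ hp
  · simp only [dterm]
    rw [show 2 * j + (2 * k + 1) = 2 * (j + k) + 1 by ring, mom_odd]
    simp

lemma summable_dterm (a y : ℂ) (ha1 : ∀ n : ℕ, a + 1 / 2 ≠ -(n : ℂ)) :
    Summable (dterm a y) :=
  (two_mul_inj.summable_iff (dterm_odd a y)).1 (summable_dterm_even a y ha1)

lemma tsum_antidiag {f : ℕ × ℕ → ℂ} (hf : Summable f) :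
    ∑' p, f p = ∑' n, ∑ p ∈ Finset.HasAntidiagonal.antidiagonal n, f p := by
  conv_rhs => congr; ext; rw [← Finset.sum_finset_coe, ← tsum_fintype (L := .unconditional _)]
  rw [← Finset.HasAntidiagonal.sigmaAntidiagonalEquivProd.tsum_eq f]
  exact (Finset.HasAntidiagonal.sigmaAntidiagonalEquivProd.summable_iff.2 hf).tsum_sigma'
    fun n => (hasSum_fintype _).summable

lemma lhs_term (x : ℝ) (a : ℂ) (ha1 : ∀ n : ℕ, a + 1 / 2 ≠ -(n : ℂ)) (k : ℕ) :
    (((x / 4) ^ (2 * k) * physHermite (2 * k) (x / 2) : ℝ) : ℂ) /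
        (poch (a + 1 / 2) k * (Nat.factorial k : ℂ)) =
    ∑ p ∈ Finset.HasAntidiagonal.antidiagonal k, dterm a ((x : ℂ) ^ 2) (p.1, 2 * p.2) := by
  rw [physHermite_even, Finset.mul_sum]
  push_cast
  rw [Finset.sum_div]
  refine Finset.sum_congr rfl ?_
  rintro ⟨j, i⟩ hp
  rw [Finset.HasAntidiagonal.mem_antidiagonal] at hp
  simp only at hp
  subst hp
  simp only [dterm]
  rw [← mul_add, mom_even, factorial_two_mul_poch (j + i)]
  have h1 := poch_ne_zero _ ha1 (j + i)
  have h2 : ((j + i).factorial : ℂ) ≠ 0 := by exact_mod_cast (j + i).factorial_ne_zero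
  have h3 : (j.factorial : ℂ) ≠ 0 := by exact_mod_cast j.factorial_ne_zero
  have h4 : ((2 * i).factorial : ℂ) ≠ 0 := by exact_mod_cast (2 * i).factorial_ne_zero
  have e1 : ((x : ℂ) / 4) ^ (2 * (j + i)) * 4 ^ (j + i) * (2 * ((x : ℂ) / 2)) ^ (2 * i) =
      2 ^ (2 * i) * ((x : ℂ) ^ 2 / 4) ^ (j + 2 * i) := by
    rw [pow_mul, ← mul_pow, show 2 * ((x : ℂ) / 2) = x by ring,
      show ((x : ℂ) / 4) ^ 2 * 4 = x ^ 2 / 4 by ring, show j + 2 * i = j + i + i by ring,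
      pow_add _ (j + i) i, pow_mul, pow_mul, mul_left_comm, ← mul_pow]
    congr 2
    ring
  rw [div_eq_iff (mul_ne_zero h1 h2)]
  have hq := div_mul_cancel₀ (poch (1 / 2) (j + i)) h1
  generalize poch (1 / 2) (j + i) / poch (a + 1 / 2) (j + i) = R at hq ⊢
  rw [← hq]
  generalize ((x : ℂ) / 4) ^ (2 * (j + i)) = A at e1 ⊢
  generalize (2 * ((x : ℂ) / 2)) ^ (2 * i) = B at e1 ⊢
  generalize ((x : ℂ) ^ 2 / 4) ^ (j + 2 * i) = Y at e1 ⊢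
  generalize (4 : ℂ) ^ (j + i) = F at e1 ⊢
  generalize (2 : ℂ) ^ (2 * i) = T at e1 ⊢
  linear_combination (-1 : ℂ) ^ j * (R * poch (a + 1 / 2) (j + i)) * (j + i).factorial /
    (j.factorial * (2 * i).factorial) * e1

lemma rhs_summable (y a : ℂ) (ha : ∀ n : ℕ, a ≠ -(n : ℂ))
    (ha1 : ∀ n : ℕ, a + 1 / 2 ≠ -(n : ℂ)) :
    Summable fun k : ℕ => ‖poch (a / 2) k * poch ((a + 1) / 2) k * (-y) ^ k /
            (poch a k * poch (a + 1 / 2) k * (Nat.factorial k : ℂ))‖ := by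
  obtain ⟨K, hK0, hK⟩ := poch_ratio_bound (a / 2) a ha
  obtain ⟨M, hM0, hM⟩ := poch_ratio_bound ((a + 1) / 2) (a + 1 / 2) ha1
  refine Summable.of_nonneg_of_le (fun _ => norm_nonneg _) (fun k => ?_)
    (Real.summable_pow_div_factorial (K * M * ‖y‖))
  have e : poch (a / 2) k * poch ((a + 1) / 2) k * (-y) ^ k /
            (poch a k * poch (a + 1 / 2) k * (Nat.factorial k : ℂ)) =
      (poch (a / 2) k / poch a k) * (poch ((a + 1) / 2) k / poch (a + 1 / 2) k) *
        ((-y) ^ k / (Nat.factorial k : ℂ)) := by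
    rw [div_mul_div_comm, div_mul_div_comm]
  rw [e, norm_mul, norm_mul, norm_div ((-y) ^ k), norm_pow, norm_neg, Complex.norm_natCast,
    mul_pow, mul_pow, mul_div_assoc]
  have := hK k
  have := hM k
  gcongr

/-- Even Hermite series in closed ₂F₂-form:
`Σ_k (x/4)^{2k} H_{2k}(x/2)/((a+1/2)_k k!) = e^{x²/4} ₂F₂(a/2, (a+1)/2; a, a+1/2; -x²)`. -/
theorem hermite_even_series
    (x : ℝ) (a : ℂ)
    (ha : ∀ n : ℕ, a ≠ -(n : ℂ))
    (ha1 : ∀ n : ℕ, a + 1 / 2 ≠ -(n : ℂ)) :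
    ∑' k : ℕ, (((x / 4) ^ (2 * k) * physHermite (2 * k) (x / 2) : ℝ) : ℂ) /
        (poch (a + 1 / 2) k * (Nat.factorial k : ℂ))
      = Complex.exp ((x : ℂ) ^ 2 / 4) *
          ∑' k : ℕ, poch (a / 2) k * poch ((a + 1) / 2) k * (-(x : ℂ) ^ 2) ^ k /
            (poch a k * poch (a + 1 / 2) k * (Nat.factorial k : ℂ)) := by
  have hE : Complex.exp ((x : ℂ) ^ 2 / 4) = ∑' n : ℕ, ((x : ℂ) ^ 2 / 4) ^ n / (n.factorial : ℂ) := by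
    rw [Complex.exp_eq_exp_ℂ, NormedSpace.exp_eq_tsum_div]
  have hEs : Summable fun n : ℕ => ‖((x : ℂ) ^ 2 / 4) ^ n / (n.factorial : ℂ)‖ := by
    simp only [norm_div, norm_pow, Complex.norm_natCast]
    exact Real.summable_pow_div_factorial _
  rw [hE, tsum_mul_tsum_eq_tsum_sum_antidiagonal_of_summable_norm hEs
    (rhs_summable ((x : ℂ) ^ 2) a ha ha1), tsum_congr (lhs_term x a ha1),
    ← tsum_antidiag (f := fun p : ℕ × ℕ => dterm a ((x : ℂ) ^ 2) (p.1, 2 * p.2))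
      (summable_dterm_even a _ ha1)]
  have h2 : ∑' p : ℕ × ℕ, dterm a ((x : ℂ) ^ 2) (p.1, 2 * p.2) =
      ∑' p : ℕ × ℕ, dterm a ((x : ℂ) ^ 2) p := by
    refine two_mul_inj.tsum_eq (f := dterm a ((x : ℂ) ^ 2)) fun p hp => ?_
    by_contra h
    exact hp (dterm_odd a _ p h)
  rw [h2, tsum_antidiag (summable_dterm a _ ha1)]
  refine tsum_congr fun n => ?_
  have h3 := congrArg (fun z => z * ((x : ℂ) ^ 2 / 4) ^ n) (coeff_identity a ha ha1 n)
  simp only [Finset.sum_mul] at h3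
  refine Eq.trans (Finset.sum_congr rfl ?_) (h3.trans (Finset.sum_congr rfl ?_))
  · rintro ⟨j, l⟩ hp
    rw [Finset.HasAntidiagonal.mem_antidiagonal] at hp
    simp only at hp
    subst hp
    rfl
  · rintro ⟨j, l⟩ hp
    rw [Finset.HasAntidiagonal.mem_antidiagonal] at hp
    simp only at hp
    subst hp
    have e : (-(x : ℂ) ^ 2) ^ l = (-4) ^ l * ((x : ℂ) ^ 2 / 4) ^ l := by
      rw [← mul_pow]
      congr 1
      ring
    simp only
    rw [e, pow_add]
    simp only [div_eq_mul_inv, mul_inv]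
    ring
end

section
/- Let r be a positive integer, m_1, …, m_r positive integers with m := m_1 + ⋯ + m_r, and let a, c, d_1, …, d_r be complex numbers with Re(c − a) > m, such that c and c − a are not nonpositive integers or zero, each d_i is not a nonpositive integer or zero, and (1+a−c)_k ≠ 0 for 1 ≤ k ≤ m. Define C_k := ((−1)^k / k!) · Σ_{j=0}^k (−k)_j ∏_{i=1}^r (d_i+m_i)_j / (∏_{i=1}^r (d_i)_j · j!) for 0 ≤ k ≤ m. Then Σ_{k=1}^∞ (a)_k ∏_{i=1}^r (d_i+m_i)_k / ((c)_k ∏_{i=1}^r (d_i)_k · k) = ψ(c) − ψ(c−a) + Σ_{k=1}^m (−1)^k (a)_k (k−1)! C_k / (1+a−c)_k. -/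
/-- The digamma function `ψ(z) = Γ'(z)/Γ(z)`. -/
noncomputable def digamma (z : ℂ) : ℂ := deriv Complex.Gamma z / Complex.Gamma z

open Filter Topology Asymptotics

namespace Entry9

lemma poch_zero (a : ℂ) : poch a 0 = 1 := by simp [poch]

lemma poch_succ (a : ℂ) (n : ℕ) : poch a (n + 1) = poch a n * (a + n) := by
  simp [poch, ascPochhammer_succ_eval]

lemma poch_succ_left (a : ℂ) (n : ℕ) : poch a (n + 1) = a * poch (a + 1) n := by
  simp [poch, ascPochhammer_succ_left, Polynomial.eval_comp]

lemma poch_eq_prod (a : ℂ) (n : ℕ) : poch a n = ∏ j ∈ Finset.range n, (a + j) := by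
  induction n with
  | zero => simp [poch_zero]
  | succ n ih => rw [poch_succ, ih, Finset.prod_range_succ]

lemma poch_add (a : ℂ) (n k : ℕ) : poch a (n + k) = poch a n * poch (a + n) k := by
  rw [poch_eq_prod, poch_eq_prod, poch_eq_prod, Finset.prod_range_add]
  congr 1
  refine Finset.prod_congr rfl fun j _ => ?_
  push_cast; ring

lemma add_ne_zero_of {c : ℂ} (hc : ∀ n : ℕ, c ≠ -(n : ℂ)) (n : ℕ) : c + n ≠ 0 := by
  intro h
  exact hc n (eq_neg_of_add_eq_zero_left h)

lemma poch_ne_zero {c : ℂ} (hc : ∀ n : ℕ, c ≠ -(n : ℂ)) (n : ℕ) : poch c n ≠ 0 := by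
  rw [poch_eq_prod, Finset.prod_ne_zero_iff]
  exact fun j _ => add_ne_zero_of hc j

lemma shift_hyp {c : ℂ} (hc : ∀ n : ℕ, c ≠ -(n : ℂ)) (N : ℕ) : ∀ n : ℕ, c + N ≠ -(n : ℂ) := by
  intro n h
  apply hc (N + n)
  push_cast
  linear_combination h

lemma gammaSeq_eq (s : ℂ) (n : ℕ) :
    Complex.GammaSeq s n = (n : ℂ) ^ s * n.factorial / poch s (n + 1) := by
  rw [Complex.GammaSeq, poch_eq_prod]

/-- growth of the ratio of Pochhammer symbols -/
lemma ratio_isBigO (a : ℂ) {c : ℂ} (hc : ∀ n : ℕ, c ≠ -(n : ℂ)) :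
    (fun n : ℕ => poch a (n + 1) / poch c (n + 1)) =O[atTop]
      fun n : ℕ => (n : ℝ) ^ (a - c).re := by
  by_cases ha : ∀ n : ℕ, a ≠ -(n : ℂ)
  · have h1 : Tendsto (fun n => Complex.GammaSeq c n / Complex.GammaSeq a n) atTop
        (𝓝 (Complex.Gamma c / Complex.Gamma a)) :=
      (Complex.GammaSeq_tendsto_Gamma c).div (Complex.GammaSeq_tendsto_Gamma a)
        (Complex.Gamma_ne_zero ha)
    have h2 := (h1.isBigO_one ℂ).mul (isBigO_refl (fun n : ℕ => (n : ℂ) ^ (a - c)) atTop)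
    refine IsBigO.trans (IsBigO.congr' h2 ?_ (EventuallyEq.refl _ _)) ?_
    · filter_upwards [eventually_ne_atTop 0] with n hn
      have hn' : (n : ℂ) ≠ 0 := by exact_mod_cast hn
      rw [gammaSeq_eq, gammaSeq_eq, Complex.cpow_sub _ _ hn']
      have := poch_ne_zero ha (n + 1)
      have := poch_ne_zero hc (n + 1)
      have h3 : (n : ℂ) ^ a ≠ 0 := by simp [Complex.cpow_eq_zero_iff, hn]
      have h4 : (n : ℂ) ^ c ≠ 0 := by simp [Complex.cpow_eq_zero_iff, hn]
      have h5 : (n.factorial : ℂ) ≠ 0 := by exact_mod_cast n.factorial_ne_zero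
      field_simp
    · refine IsBigO.of_bound 1 ?_
      filter_upwards [eventually_gt_atTop 0] with n hn
      rw [one_mul, one_mul, Complex.norm_natCast_cpow_of_pos hn]
      exact le_abs_self _
  · push Not at ha
    obtain ⟨k, hk⟩ := ha
    refine IsBigO.of_bound 1 ?_
    filter_upwards [eventually_ge_atTop k] with n hn
    have : poch a (n + 1) = 0 := by
      rw [poch_eq_prod]
      refine Finset.prod_eq_zero (i := k) (by simp; omega) (by rw [hk]; ring)
    rw [this]
    simp only [zero_div, norm_zero]
    positivity

lemma term_isBigO (a : ℂ) {c : ℂ} (hc : ∀ n : ℕ, c ≠ -(n : ℂ)) (p : ℕ) :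
    (fun n : ℕ => poch a (n + 1) / poch c (n + 1) * (n.descFactorial p : ℂ)) =O[atTop]
      fun n : ℕ => (n : ℝ) ^ ((a - c).re + p) := by
  have h : (fun n : ℕ => (n.descFactorial p : ℂ)) =O[atTop] fun n : ℕ => (n : ℝ) ^ (p : ℝ) := by
    refine IsBigO.of_bound 1 (Eventually.of_forall fun n => ?_)
    rw [one_mul, Real.rpow_natCast, Complex.norm_natCast, norm_pow, Real.norm_natCast]
    exact_mod_cast Nat.descFactorial_le_pow n p
  refine ((ratio_isBigO a hc).mul h).congr' (EventuallyEq.refl _ _) ?_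
  filter_upwards [eventually_gt_atTop 0] with n hn
  rw [Real.rpow_add (by exact_mod_cast hn)]

lemma term_summable (a : ℂ) {c : ℂ} (hc : ∀ n : ℕ, c ≠ -(n : ℂ)) (p : ℕ)
    (h : (p : ℝ) + 1 < (c - a).re) :
    Summable (fun n : ℕ => poch a (n + 1) / poch c (n + 1) * (n.descFactorial p : ℂ)) := by
  refine summable_of_isBigO_nat (g := fun n : ℕ => (n : ℝ) ^ ((a - c).re + p)) ?_ (term_isBigO a hc p)
  rw [Real.summable_nat_rpow]
  simp only [Complex.sub_re] at *
  linarith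

lemma boundary_tendsto (a : ℂ) {c : ℂ} (hc : ∀ n : ℕ, c ≠ -(n : ℂ)) (p : ℕ)
    (h : (p : ℝ) + 1 < (c - a).re) :
    Tendsto (fun n : ℕ => poch a (n + 1) / poch c (n + 1) * (n.descFactorial p : ℂ) * (c + n))
      atTop (𝓝 0) := by
  have h1 : (fun n : ℕ => c + (n : ℂ)) =O[atTop] fun n : ℕ => (n : ℝ) ^ (1 : ℝ) := by
    refine IsBigO.of_bound (‖c‖ + 1) ?_
    filter_upwards [eventually_ge_atTop 1] with n hn
    have hn' : (1 : ℝ) ≤ n := by exact_mod_cast hn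
    rw [Real.rpow_one, Real.norm_natCast]
    calc ‖c + n‖ ≤ ‖c‖ + n := by simpa using norm_add_le c (n : ℂ)
      _ ≤ _ := by nlinarith [norm_nonneg c]
  have h2 := (term_isBigO a hc p).mul h1
  refine h2.trans_tendsto ?_
  have h3 : Tendsto (fun n : ℕ => (n : ℝ) ^ (-((c - a).re - p - 1))) atTop (𝓝 0) :=
    (tendsto_rpow_neg_atTop (by linarith)).comp tendsto_natCast_atTop_atTop
  refine h3.congr' ?_
  filter_upwards [eventually_gt_atTop 0] with n hn
  rw [← Real.rpow_add (by exact_mod_cast hn)]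
  congr 1
  simp only [Complex.sub_re]
  ring

lemma descF_succ (n p : ℕ) :
    ((n + 1).descFactorial (p + 1) : ℂ) = (n + 1) * n.descFactorial p := by
  rw [Nat.succ_descFactorial_succ]; push_cast; ring

lemma descF_succ' (n p : ℕ) :
    (n.descFactorial (p + 1) : ℂ) = (n - p) * n.descFactorial p := by
  rw [Nat.descFactorial_succ]
  rcases le_or_gt p n with h | h
  · push_cast [Nat.cast_sub h]; ring
  · rw [Nat.descFactorial_eq_zero_iff_lt.2 h]; simp

lemma tsum_telescope {f g : ℕ → ℂ} (hf : Summable f) (hg : Tendsto g atTop (𝓝 0))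
    (h : ∀ n, f n = g (n + 1) - g n) : ∑' n, f n = - g 0 := by
  have h1 := hf.hasSum.tendsto_sum_nat
  have h2 : Tendsto (fun n => ∑ i ∈ Finset.range n, f i) atTop (𝓝 (0 - g 0)) := by
    simp_rw [h, Finset.sum_range_sub]
    exact hg.sub_const _
  rw [tendsto_nhds_unique h1 h2, zero_sub]

lemma factor_ne_zero {a c : ℂ} {p : ℕ} (h : (p : ℝ) + 1 < (c - a).re) {j : ℕ} (hj : j ≤ p) :
    1 + a - c + j ≠ 0 := by
  intro h0
  have := congrArg Complex.re h0
  have hj' : (j : ℝ) ≤ p := by exact_mod_cast hj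
  simp at this h
  linarith

/-- the closed form of the contiguous sums -/
lemma T_eq (a : ℂ) {c : ℂ} (hc : ∀ n : ℕ, c ≠ -(n : ℂ)) (p : ℕ)
    (h : (p : ℝ) + 1 < (c - a).re) :
    ∑' n : ℕ, poch a (n + 1) / poch c (n + 1) * (n.descFactorial p : ℂ)
      = (-1) ^ (p + 1) * poch a (p + 1) * p.factorial / poch (1 + a - c) (p + 1) := by
  induction p with
  | zero =>
    have hS := term_summable a hc 0 h
    have hB := boundary_tendsto a hc 0 h
    have hne : 1 + a - c ≠ 0 := by simpa using factor_ne_zero h (le_refl 0)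
    have := tsum_telescope (hS.mul_left (1 + a - c)) hB ?_
    · rw [tsum_mul_left] at this
      simp only [zero_add, poch_succ, poch_zero] at this ⊢
      have hc0 := add_ne_zero_of hc 0
      simp at this hc0 ⊢
      rw [eq_div_iff hne, mul_comm, this]
      field_simp
    · intro n
      have := poch_ne_zero hc (n + 1)
      have h1 := add_ne_zero_of hc (n + 1)
      rw [poch_succ a (n + 1), poch_succ c (n + 1)]
      push_cast at h1 ⊢
      simp only [Nat.descFactorial_zero, Nat.cast_one]
      field_simp
      ring
  | succ p ih =>
    have h' : (p : ℝ) + 1 < (c - a).re := by push_cast at h; linarith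
    have hS := term_summable a hc (p + 1) h
    have hS' := term_summable a hc p h'
    have hB := boundary_tendsto a hc (p + 1) h
    have hne : 1 + a - c + ((p + 1 : ℕ) : ℂ) ≠ 0 := factor_ne_zero h (le_refl _)
    have hne' : poch (1 + a - c) (p + 1) ≠ 0 := by
      rw [poch_eq_prod, Finset.prod_ne_zero_iff]
      intro j hj
      exact factor_ne_zero h' (by simp at hj; omega)
    have := tsum_telescope ((hS.mul_left (1 + a - c + ((p + 1 : ℕ) : ℂ))).add
      (hS'.mul_left ((p + 1) * (a + ((p + 1 : ℕ) : ℂ))))) hB ?_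
    · rw [Summable.tsum_add (hS.mul_left _) (hS'.mul_left _), tsum_mul_left, tsum_mul_left,
        ih h'] at this
      rw [poch_succ _ (p + 1), poch_succ _ (p + 1), Nat.factorial_succ, eq_div_iff (by positivity)]
      simp only [Nat.zero_descFactorial_succ, Nat.cast_zero, mul_zero, zero_mul, neg_zero] at this
      generalize (∑' n : ℕ, poch a (n + 1) / poch c (n + 1) * (n.descFactorial (p + 1) : ℂ)) = T at this ⊢
      field_simp at this
      push_cast at this ⊢
      linear_combination this
    · intro n
      have := poch_ne_zero hc (n + 1)
      have h1 := add_ne_zero_of hc (n + 1)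
      rw [poch_succ a (n + 1), poch_succ c (n + 1), descF_succ, descF_succ']
      push_cast at h1 ⊢
      field_simp
      ring

lemma tendsto_one_div_add_nat (s : ℂ) :
    Tendsto (fun n : ℕ => 1 / (s + (n : ℂ))) atTop (𝓝 0) := by
  have h1 : Tendsto (fun n : ℕ => ‖s + (n : ℂ)‖) atTop atTop := by
    refine tendsto_atTop_mono (f := fun n : ℕ => (n : ℝ) + -‖s‖) (fun n => ?_)
      (tendsto_atTop_add_const_right _ _ tendsto_natCast_atTop_atTop)
    have := norm_sub_le (s + (n : ℂ)) s
    rw [add_sub_cancel_left, Complex.norm_natCast] at this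
    linarith
  rw [tendsto_zero_iff_norm_tendsto_zero]
  simp only [one_div, norm_inv]
  exact h1.inv_tendsto_atTop

lemma norm_gammaSeq_le {s : ℂ} (hs : 0 < s.re) {n : ℕ} (hn : n ≠ 0) :
    ‖Complex.GammaSeq s n‖ ≤ Real.Gamma s.re := by
  have h1 := Real.BohrMollerup.ge_logGammaSeq Real.convexOn_log_Gamma (fun {y} hy => by
    rw [Function.comp_apply, Real.Gamma_add_one hy.ne', Real.log_mul hy.ne' (Real.Gamma_pos_of_pos hy).ne',
      add_comm, Function.comp_apply]) hs hn
  simp only [Function.comp_apply, Real.Gamma_one, Real.log_one, zero_add] at h1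
  rw [← Real.exp_le_exp, Real.exp_log (Real.Gamma_pos_of_pos hs)] at h1
  refine le_trans ?_ h1
  have hn0 : (0 : ℝ) < n := by exact_mod_cast Nat.pos_of_ne_zero hn
  have hpos : ∀ m ∈ Finset.range (n + 1), 0 < s.re + (m : ℝ) := fun m _ => by positivity
  have h2 : Real.exp (Real.BohrMollerup.logGammaSeq s.re n)
      = (n : ℝ) ^ s.re * n.factorial / ∏ m ∈ Finset.range (n + 1), (s.re + m) := by
    rw [Real.BohrMollerup.logGammaSeq, Real.exp_sub, Real.exp_add, Real.exp_sum,
      Real.exp_log (by positivity), Real.rpow_def_of_pos hn0, mul_comm (Real.log _)]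
    congr 1
    exact Finset.prod_congr rfl fun m hm => Real.exp_log (hpos m hm)
  rw [h2, Complex.GammaSeq, norm_div, norm_mul, Complex.norm_natCast_cpow_of_pos (Nat.pos_of_ne_zero hn),
    Complex.norm_natCast, norm_prod]
  refine div_le_div_of_nonneg_left (by positivity) (Finset.prod_pos hpos) ?_
  refine Finset.prod_le_prod (fun m hm => (hpos m hm).le) fun m _ => ?_
  have := Complex.re_le_norm (s + m)
  simpa using this

lemma ne_neg_of_re_pos {s : ℂ} (hs : 0 < s.re) : ∀ n : ℕ, s ≠ -(n : ℂ) := by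
  rintro n rfl
  simp at hs
  linarith [(Nat.cast_nonneg n : (0 : ℝ) ≤ n)]

lemma hasDerivAt_gammaSeq {s : ℂ} (hs : ∀ n : ℕ, s ≠ -(n : ℂ)) {n : ℕ} (hn : n ≠ 0) :
    HasDerivAt (fun z => Complex.GammaSeq z n)
      (Complex.GammaSeq s n * (Complex.log n - ∑ j ∈ Finset.range (n + 1), 1 / (s + j))) s := by
  have hn' : (n : ℂ) ≠ 0 := by exact_mod_cast hn
  have h1 : HasDerivAt (fun z : ℂ => (n : ℂ) ^ z) ((n : ℂ) ^ s * Complex.log n) s := by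
    simpa using (hasDerivAt_id s).const_cpow (Or.inl hn')
  have h2 : HasDerivAt (fun z : ℂ => ∏ j ∈ Finset.range (n + 1), (z + (j : ℂ)))
      ((∏ j ∈ Finset.range (n + 1), (s + (j : ℂ))) * ∑ j ∈ Finset.range (n + 1), 1 / (s + j)) s := by
    have := HasDerivAt.fun_finsetProd (u := Finset.range (n + 1)) (f := fun (j : ℕ) (z : ℂ) => z + (j : ℂ))
      (f' := fun _ => 1) (x := s) (fun j _ => (hasDerivAt_id s).add_const _)
    refine HasDerivAt.congr_deriv this ?_
    rw [Finset.mul_sum]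
    refine Finset.sum_congr rfl fun j hj => ?_
    rw [← Finset.mul_prod_erase (Finset.range (n + 1)) (fun j : ℕ => s + (j : ℂ)) hj]
    have := add_ne_zero_of hs j
    simp only [smul_eq_mul]
    field_simp
  have hP : (∏ j ∈ Finset.range (n + 1), (s + (j : ℂ))) ≠ 0 :=
    Finset.prod_ne_zero_iff.2 fun j _ => add_ne_zero_of hs j
  have h3 := (h1.mul_const (n.factorial : ℂ)).div h2 hP
  refine HasDerivAt.congr_deriv h3 ?_
  simp only [Complex.GammaSeq]
  field_simp

lemma tendsto_deriv_gammaSeq {s : ℂ} (hs : 0 < s.re) :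
    Tendsto (fun n : ℕ => deriv (fun z => Complex.GammaSeq z n) s) atTop
      (𝓝 (deriv Complex.Gamma s)) := by
  have hU : IsOpen {z : ℂ | 0 < z.re} := isOpen_lt continuous_const Complex.continuous_re
  set r := s.re / 2 with hr
  have hr0 : 0 < r := by positivity
  have hball : Metric.closedBall s r ⊆ {z : ℂ | 0 < z.re} := by
    intro z hz
    have h1 := Complex.abs_re_le_norm (z - s)
    rw [mem_closedBall_iff_norm] at hz
    have h2 := abs_le.1 (h1.trans hz)
    simp only [Complex.sub_re] at h2
    simp only [Set.mem_ofPred_eq]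
    linarith [h2.1]
  have hd1 : DifferentiableOn ℂ Complex.Gamma {z : ℂ | 0 < z.re} := fun z hz =>
    (Complex.differentiableAt_Gamma z (ne_neg_of_re_pos hz)).differentiableWithinAt
  have hd2 : ∀ n : ℕ, n ≠ 0 → DifferentiableOn ℂ (fun z => Complex.GammaSeq z n) {z : ℂ | 0 < z.re} :=
    fun n hn z hz =>
      (hasDerivAt_gammaSeq (ne_neg_of_re_pos hz) hn).differentiableAt.differentiableWithinAt
  rw [← Complex.cderiv_eq_deriv hU hd1 hr0 hball]
  have key : Tendsto (fun n : ℕ => Complex.cderiv r (fun z => Complex.GammaSeq z n) s) atTop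
      (𝓝 (Complex.cderiv r Complex.Gamma s)) := by
    unfold Complex.cderiv circleIntegral
    refine Tendsto.const_smul ?_ _
    obtain ⟨B, hB⟩ : ∃ B, ∀ z ∈ Metric.closedBall s r, Real.Gamma z.re ≤ B := by
      have hc : ContinuousOn (fun z : ℂ => Real.Gamma z.re) (Metric.closedBall s r) := by
        intro z hz
        have hz' : 0 < z.re := hball hz
        have : ContinuousAt Real.Gamma z.re :=
          (Real.differentiableAt_Gamma fun m => by
            linarith [(Nat.cast_nonneg m : (0 : ℝ) ≤ m)] ).continuousAt
        exact (ContinuousAt.comp (f := fun z : ℂ => z.re) this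
          Complex.continuous_re.continuousAt).continuousWithinAt
      obtain ⟨B, hB⟩ := ((isCompact_closedBall s r).image_of_continuousOn hc).bddAbove
      exact ⟨B, fun z hz => hB (Set.mem_image_of_mem _ hz)⟩
    have hmem : ∀ θ, circleMap s r θ ∈ Metric.closedBall s r := fun θ =>
      circleMap_mem_closedBall _ hr0.le _
    refine intervalIntegral.tendsto_integral_filter_of_dominated_convergence
      (fun _ => r * ((r ^ 2)⁻¹ * B)) ?_ ?_ ?_ ?_
    · filter_upwards [eventually_ne_atTop 0] with n hn
      refine Continuous.aestronglyMeasurable ?_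
      have h1 : Continuous fun θ => Complex.GammaSeq (circleMap s r θ) n :=
        ((hd2 n hn).continuousOn).comp_continuous (continuous_circleMap s r) fun θ => hball (hmem θ)
      have h2 : Continuous fun θ => ((circleMap s r θ - s) ^ 2)⁻¹ := by
        refine Continuous.inv₀ (by fun_prop) fun θ => ?_
        simpa [sub_eq_zero] using circleMap_ne_center (c := s) (θ := θ) hr0.ne'
      simp only [deriv_circleMap]
      fun_prop
    · filter_upwards [eventually_ne_atTop 0] with n hn
      refine Eventually.of_forall fun θ _ => ?_
      have h1 := (norm_gammaSeq_le (hball (hmem θ)) hn).trans (hB _ (hmem θ))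
      simp only [smul_eq_mul, norm_mul, deriv_circleMap, norm_inv, norm_pow, circleMap_sub_center,
        norm_circleMap_zero, Complex.norm_I, mul_one, abs_of_pos hr0]
      gcongr
    · simp
    · refine Eventually.of_forall fun θ _ => ?_
      exact ((Complex.GammaSeq_tendsto_Gamma _).const_smul _).const_smul _
  refine key.congr' ?_
  filter_upwards [eventually_ne_atTop 0] with n hn
  exact Complex.cderiv_eq_deriv hU (hd2 n hn) hr0 hball

lemma tendsto_digamma_pos {s : ℂ} (hs : 0 < s.re) :
    Tendsto (fun n : ℕ => Complex.log n - ∑ j ∈ Finset.range (n + 1), 1 / (s + j)) atTop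
      (𝓝 (digamma s)) := by
  have hs' := ne_neg_of_re_pos hs
  have := (tendsto_deriv_gammaSeq hs).div (Complex.GammaSeq_tendsto_Gamma s)
    (Complex.Gamma_ne_zero hs')
  refine this.congr' ?_
  filter_upwards [eventually_ne_atTop 0] with n hn
  rw [Pi.div_apply, (hasDerivAt_gammaSeq hs' hn).deriv]
  have hne : Complex.GammaSeq s n ≠ 0 := by
    rw [gammaSeq_eq]
    have := poch_ne_zero hs' (n + 1)
    have h5 : (n.factorial : ℂ) ≠ 0 := by exact_mod_cast n.factorial_ne_zero
    have h3 : (n : ℂ) ^ s ≠ 0 := by simp [Complex.cpow_eq_zero_iff, hn]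
    positivity
  field_simp

lemma digamma_add_one {s : ℂ} (hs : ∀ n : ℕ, s ≠ -(n : ℂ)) : digamma (s + 1) = digamma s + 1 / s := by
  have := Complex.digamma_apply_add_one s hs
  rw [one_div]
  exact this

lemma tendsto_digamma {s : ℂ} (hs : ∀ n : ℕ, s ≠ -(n : ℂ)) :
    Tendsto (fun n : ℕ => Complex.log n - ∑ j ∈ Finset.range (n + 1), 1 / (s + j)) atTop
      (𝓝 (digamma s)) := by
  obtain ⟨N, hN⟩ := exists_nat_gt (-s.re)
  induction N generalizing s with
  | zero => exact tendsto_digamma_pos (by simpa using hN)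
  | succ N ih =>
    have h1 : ∀ n : ℕ, s + 1 ≠ -(n : ℂ) := by simpa using shift_hyp hs 1
    have h2 := ih h1 (by simp at hN ⊢; linarith)
    rw [digamma_add_one hs] at h2
    have h0 : Tendsto (fun n : ℕ => 1 / (s + ((n + 1 : ℕ) : ℂ))) atTop (𝓝 0) := by
      exact (tendsto_one_div_add_nat s).comp (tendsto_add_atTop_nat 1)
    have h3 := (h2.sub_const (1 / s)).add h0
    rw [add_sub_cancel_right, add_zero] at h3
    refine h3.congr fun n => ?_
    have e1 := Finset.sum_range_succ (fun j : ℕ => 1 / (s + (j : ℂ))) (n + 1)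
    have e2 := Finset.sum_range_succ' (fun j : ℕ => 1 / (s + (j : ℂ))) (n + 1)
    have e3 : ∑ j ∈ Finset.range (n + 1), 1 / (s + 1 + (j : ℂ))
        = ∑ j ∈ Finset.range (n + 1), 1 / (s + ((j + 1 : ℕ) : ℂ)) := by
      refine Finset.sum_congr rfl fun j _ => ?_
      push_cast; ring
    rw [e3]
    simp only [Nat.cast_zero, add_zero] at e1 e2
    linear_combination e2 - e1

lemma F_summable (a : ℂ) {c : ℂ} (hc : ∀ n : ℕ, c ≠ -(n : ℂ)) (h : 1 < (c - a).re) :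
    Summable (fun k : ℕ => poch a (k + 1) / poch c (k + 1) / (k + 1)) := by
  have h1 := term_summable a hc 0 (by simpa using h)
  refine Summable.of_norm_bounded h1.norm fun k => ?_
  rw [norm_div]
  have : ‖((k : ℂ) + 1)‖ = (k : ℝ) + 1 := by
    have := Complex.norm_natCast (k + 1)
    push_cast at this
    exact this
  rw [this]
  simp only [Nat.descFactorial_zero, Nat.cast_one, mul_one]
  exact div_le_self (norm_nonneg _) (by simp)

lemma F_step (a : ℂ) {c : ℂ} (hc : ∀ n : ℕ, c ≠ -(n : ℂ)) (h : 1 < (c - a).re) :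
    ∑' k : ℕ, poch a (k + 1) / poch c (k + 1) / (k + 1)
      = ∑' k : ℕ, poch a (k + 1) / poch (c + 1) (k + 1) / (k + 1) + (1 / (c - a) - 1 / c) := by
  have hc1 : ∀ n : ℕ, c + 1 ≠ -(n : ℂ) := by simpa using shift_hyp hc 1
  have h1 : 1 < (c + 1 - a).re := by simp at h ⊢; linarith
  have hT := T_eq a hc1 0 (by simpa using h1)
  have hc0 : c ≠ 0 := by simpa using hc 0
  have hca : c - a ≠ 0 := by
    intro h0; rw [h0] at h; simp at h; linarith
  have key : ∑' k : ℕ, poch a (k + 1) / poch c (k + 1) / (k + 1)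
      - ∑' k : ℕ, poch a (k + 1) / poch (c + 1) (k + 1) / (k + 1)
      = (1 / c) * ∑' n : ℕ, poch a (n + 1) / poch (c + 1) (n + 1) * (n.descFactorial 0 : ℂ) := by
    rw [← Summable.tsum_sub (F_summable a hc h) (F_summable a hc1 h1), ← tsum_mul_left]
    refine tsum_congr fun k => ?_
    have e : poch c (k + 1) * (c + ((k + 1 : ℕ) : ℂ)) = c * poch (c + 1) (k + 1) := by
      rw [← poch_succ, poch_succ_left]
    have n1 := poch_ne_zero hc (k + 1)
    have n2 := poch_ne_zero hc1 (k + 1)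
    have n3 : (k : ℂ) + 1 ≠ 0 := by exact_mod_cast Nat.succ_ne_zero k
    push_cast at e
    simp only [Nat.descFactorial_zero, Nat.cast_one, mul_one]
    field_simp
    linear_combination -poch a (k+1) * e
  rw [← sub_eq_iff_eq_add', key, hT]
  have hca' : 1 + a - (c + 1) ≠ 0 := by
    intro h0; apply hca; linear_combination -h0
  simp [poch_succ, poch_zero]
  field_simp
  ring

lemma F_iter (a : ℂ) {c : ℂ} (hc : ∀ n : ℕ, c ≠ -(n : ℂ)) (h : 1 < (c - a).re) (N : ℕ) :
    ∑' k : ℕ, poch a (k + 1) / poch c (k + 1) / (k + 1)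
      = ∑' k : ℕ, poch a (k + 1) / poch (c + N) (k + 1) / (k + 1)
        + (∑ j ∈ Finset.range N, 1 / (c - a + j) - ∑ j ∈ Finset.range N, 1 / (c + j)) := by
  induction N with
  | zero => simp
  | succ N ih =>
    rw [ih, F_step a (shift_hyp hc N) (by simp at h ⊢; linarith [(Nat.cast_nonneg N : (0:ℝ) ≤ N)]),
      Finset.sum_range_succ, Finset.sum_range_succ]
    push_cast
    have : c + (N : ℂ) - a = c - a + N := by ring
    rw [this, add_assoc c (N : ℂ) 1]
    ring

lemma norm_poch_le {s : ℂ} (hs : 0 < s.re) (N n : ℕ) : ‖poch s n‖ ≤ ‖poch (s + N) n‖ := by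
  rw [poch_eq_prod, poch_eq_prod, norm_prod, norm_prod]
  refine Finset.prod_le_prod (fun _ _ => norm_nonneg _) fun j _ => ?_
  rw [Complex.norm_def, Complex.norm_def]
  refine Real.sqrt_le_sqrt ?_
  simp only [Complex.normSq_apply]
  simp
  have : (0 : ℝ) ≤ N := Nat.cast_nonneg N
  have : (0 : ℝ) ≤ j := Nat.cast_nonneg j
  nlinarith

lemma F_tendsto_pos (a : ℂ) {c : ℂ} (hs : 0 < c.re) (h : 1 < (c - a).re) :
    Tendsto (fun N : ℕ => ∑' k : ℕ, poch a (k + 1) / poch (c + N) (k + 1) / (k + 1)) atTop (𝓝 0) := by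
  have hc := ne_neg_of_re_pos hs
  have hs1 : 0 < (c + 1).re := by simp; linarith
  have hc1 := ne_neg_of_re_pos hs1
  -- the dominating series
  have hb : Summable (fun k : ℕ => ‖poch (a + 1) k / poch (c + 1) k / (k + 1)‖) := by
    rw [← summable_nat_add_iff 1]
    refine Summable.of_nonneg_of_le (fun _ => norm_nonneg _) (fun k => ?_)
      (F_summable (a + 1) hc1 (by simpa using h)).norm
    rw [norm_div, norm_div _ ((k : ℂ) + 1)]
    have e1 : ‖((k : ℂ) + 1)‖ = (k : ℝ) + 1 := by
      have := Complex.norm_natCast (k + 1)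
      push_cast at this
      exact this
    have e2 : ‖(((k + 1 : ℕ) : ℂ) + 1)‖ = (k : ℝ) + 1 + 1 := by
      have := Complex.norm_natCast (k + 1 + 1)
      push_cast at this ⊢
      exact this
    rw [e1, e2]
    gcongr
    linarith
  have hlim : Tendsto (fun N : ℕ => ‖a‖ * ‖1 / (c + (N : ℂ))‖ *
      ∑' k : ℕ, ‖poch (a + 1) k / poch (c + 1) k / (k + 1)‖) atTop (𝓝 0) := by
    have := ((tendsto_one_div_add_nat c).norm.const_mul ‖a‖).mul_const
      (∑' k : ℕ, ‖poch (a + 1) k / poch (c + 1) k / (k + 1)‖)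
    simpa using this
  refine squeeze_zero_norm (fun N => ?_) hlim
  refine tsum_of_norm_bounded (hb.hasSum.mul_left (‖a‖ * ‖1 / (c + (N : ℂ))‖)) fun k => ?_
  have e : c + (N : ℂ) + 1 = c + 1 + N := by ring
  rw [poch_succ_left, poch_succ_left, e]
  simp only [norm_div, norm_mul, norm_one]
  have l1 := norm_poch_le hs1 N k
  have p1 : 0 < ‖poch (c + 1) k‖ := norm_pos_iff.2 (poch_ne_zero hc1 k)
  calc ‖a‖ * ‖poch (a + 1) k‖ / (‖c + (N : ℂ)‖ * ‖poch (c + 1 + N) k‖) / ‖(k : ℂ) + 1‖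
      = ‖a‖ * (1 / ‖c + (N : ℂ)‖) * (‖poch (a + 1) k‖ / ‖poch (c + 1 + N) k‖ / ‖(k : ℂ) + 1‖) := by
        ring
    _ ≤ _ := by gcongr

lemma F_tendsto (a c : ℂ) (h : 1 < (c - a).re) :
    Tendsto (fun N : ℕ => ∑' k : ℕ, poch a (k + 1) / poch (c + N) (k + 1) / (k + 1)) atTop (𝓝 0) := by
  obtain ⟨M, hM⟩ := exists_nat_gt (-c.re)
  have := F_tendsto_pos a (c := c + M) (by simp; linarith)
    (by simp at h ⊢; linarith [(Nat.cast_nonneg M : (0:ℝ) ≤ M)])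
  rw [← tendsto_add_atTop_iff_nat M]
  refine this.congr fun N => ?_
  have e : c + (M : ℂ) + N = c + ((N + M : ℕ) : ℂ) := by push_cast; ring
  rw [e]

lemma F_eq (a : ℂ) {c : ℂ} (hc : ∀ n : ℕ, c ≠ -(n : ℂ)) (hca : ∀ n : ℕ, c - a ≠ -(n : ℂ))
    (h : 1 < (c - a).re) :
    ∑' k : ℕ, poch a (k + 1) / poch c (k + 1) / (k + 1) = digamma c - digamma (c - a) := by
  have h1 := (F_tendsto a c h).comp (tendsto_add_atTop_nat 1)
  have h2 := h1.add ((tendsto_digamma hc).sub (tendsto_digamma hca))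
  rw [zero_add] at h2
  refine tendsto_nhds_unique (tendsto_const_nhds.congr fun n => ?_) h2
  rw [F_iter a hc h (n + 1)]
  simp only [Function.comp_apply]
  ring

lemma poch_neg_nat (k j : ℕ) : poch (-(k : ℂ)) j = (-1) ^ j * (k.descFactorial j : ℂ) := by
  induction j with
  | zero => simp [poch_zero]
  | succ j ih => rw [poch_succ, ih, descF_succ']; ring

open fwdDiff in
lemma newton (Q : Polynomial ℂ) {m : ℕ} (hQ : Q.natDegree ≤ m) (n : ℕ) :
    Q.eval (n : ℂ) = ∑ k ∈ Finset.range (m + 1), ((-1 : ℂ) ^ k / (Nat.factorial k : ℂ) *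
      ∑ j ∈ Finset.range (k + 1), poch (-(k : ℂ)) j * Q.eval (j : ℂ) / (Nat.factorial j : ℂ)) *
        (n.descFactorial k : ℂ) := by
  have h1 := shift_eq_sum_fwdDiff_iter (1 : ℂ) (fun x => Q.eval x) n 0
  simp only [zero_add, nsmul_eq_mul, mul_one] at h1
  rw [h1]
  have e1 : ∑ k ∈ Finset.range (n + 1), (n.choose k : ℂ) * (fwdDiff (1 : ℂ))^[k] (fun x => Q.eval x) 0
      = ∑ k ∈ Finset.range (n + m + 1),
        (n.choose k : ℂ) * (fwdDiff (1 : ℂ))^[k] (fun x => Q.eval x) 0 := by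
    refine Finset.sum_subset (fun x => by simp; omega) fun k _ hk => ?_
    rw [Nat.choose_eq_zero_of_lt (by simp at hk; omega)]
    simp
  have e2 : ∑ k ∈ Finset.range (m + 1), (n.choose k : ℂ) * (fwdDiff (1 : ℂ))^[k] (fun x => Q.eval x) 0
      = ∑ k ∈ Finset.range (n + m + 1),
        (n.choose k : ℂ) * (fwdDiff (1 : ℂ))^[k] (fun x => Q.eval x) 0 := by
    refine Finset.sum_subset (fun x => by simp; omega) fun k _ hk => ?_
    have := Polynomial.fwdDiff_iter_eq_zero_of_degree_lt (P := Q) (n := k) (by simp at hk; omega)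
    rw [this]
    simp
  rw [e1, ← e2]
  refine Finset.sum_congr rfl fun k _ => ?_
  rw [fwdDiff_iter_eq_sum_shift, Nat.descFactorial_eq_factorial_mul_choose]
  have hk : (k.factorial : ℂ) ≠ 0 := by exact_mod_cast k.factorial_ne_zero
  have e3 : ∑ j ∈ Finset.range (k + 1), poch (-(k : ℂ)) j * Q.eval (j : ℂ) / (Nat.factorial j : ℂ)
      = (-1) ^ k * ∑ j ∈ Finset.range (k + 1),
        ((-1 : ℤ) ^ (k - j) * (k.choose j : ℤ)) • Q.eval (0 + j • (1 : ℂ)) := by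
    rw [Finset.mul_sum]
    refine Finset.sum_congr rfl fun j hj => ?_
    have hj' : j ≤ k := by simp at hj; omega
    have hf : (j.factorial : ℂ) ≠ 0 := by exact_mod_cast j.factorial_ne_zero
    rw [poch_neg_nat, Nat.descFactorial_eq_factorial_mul_choose]
    obtain ⟨i, rfl⟩ := Nat.exists_eq_add_of_le hj'
    simp only [zsmul_eq_mul, zero_add, nsmul_eq_mul, mul_one, Nat.add_sub_cancel_left]
    push_cast
    rw [pow_add]
    have : ((-1 : ℂ) ^ i) * (-1) ^ i = 1 := by rw [← mul_pow]; simp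
    field_simp
    linear_combination (-(((j + i).choose j : ℂ)) * Q.eval (j : ℂ)) * this
  rw [e3]
  have : ((-1 : ℂ) ^ k) * (-1) ^ k = 1 := by rw [← mul_pow]; simp
  push_cast
  field_simp
  linear_combination (-(n.choose k : ℂ) * ∑ j ∈ Finset.range (k + 1),
        ((-1 : ℤ) ^ (k - j) * (k.choose j : ℤ)) • Q.eval (0 + j • (1 : ℂ))) * this

lemma exists_poly {r : ℕ} (mv : Fin r → ℕ) (d : Fin r → ℂ) (hd : ∀ i, ∀ n : ℕ, d i ≠ -(n : ℂ)) :
    ∃ Q : Polynomial ℂ, Q.natDegree ≤ ∑ i, mv i ∧ ∀ n : ℕ, Q.eval (n : ℂ) =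
      (∏ i, poch (d i + (mv i : ℂ)) n) / (∏ i, poch (d i) n) := by
  refine ⟨∏ i, Polynomial.C (1 / poch (d i) (mv i)) *
    (ascPochhammer ℂ (mv i)).comp (Polynomial.X + Polynomial.C (d i)), ?_, fun n => ?_⟩
  · refine (Polynomial.natDegree_prod_le _ _).trans (Finset.sum_le_sum fun i _ => ?_)
    refine (Polynomial.natDegree_C_mul_le _ _).trans ?_
    rw [Polynomial.natDegree_comp, ascPochhammer_natDegree, Polynomial.natDegree_X_add_C, mul_one]
  · rw [Polynomial.eval_prod, ← Finset.prod_div_distrib]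
    refine Finset.prod_congr rfl fun i _ => ?_
    have e1 := poch_add (d i) (mv i) n
    have e2 := poch_add (d i) n (mv i)
    have n1 := poch_ne_zero (hd i) (mv i)
    have n2 := poch_ne_zero (hd i) n
    rw [add_comm (mv i) n, e2] at e1
    simp only [Polynomial.eval_mul, Polynomial.eval_C, Polynomial.eval_comp, Polynomial.eval_add,
      Polynomial.eval_X]
    change 1 / poch (d i) (mv i) * poch ((n : ℂ) + d i) (mv i) = _
    rw [add_comm (n : ℂ)]
    field_simp
    linear_combination e1

end Entry9

/-- Theorem 4 of the paper (extension of Ramanujan's Entry 9): for `Re(c-a) > m`,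
`Σ_{k=1}^∞ (a)_k ∏ᵢ(dᵢ+mᵢ)_k / ((c)_k ∏ᵢ(dᵢ)_k k)
  = ψ(c) - ψ(c-a) + Σ_{k=1}^m (-1)^k (a)_k (k-1)! C_k / (1+a-c)_k`. -/
theorem entry9_extension
    (r : ℕ) (hr : 0 < r)
    (mv : Fin r → ℕ) (hmv : ∀ i, 0 < mv i)
    (m : ℕ) (hm : m = ∑ i, mv i)
    (a c : ℂ) (d : Fin r → ℂ)
    (hre : (c - a).re > (m : ℝ))
    (hc : ∀ n : ℕ, c ≠ -(n : ℂ))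
    (hca : ∀ n : ℕ, c - a ≠ -(n : ℂ))
    (hd : ∀ i, ∀ n : ℕ, d i ≠ -(n : ℂ))
    (hac : ∀ k, 1 ≤ k → k ≤ m → poch (1 + a - c) k ≠ 0)
    (C : ℕ → ℂ)
    (hC : ∀ k ≤ m, C k = ((-1 : ℂ) ^ k / (Nat.factorial k : ℂ)) *
      ∑ j ∈ Finset.range (k + 1), poch (-(k : ℂ)) j * (∏ i, poch (d i + (mv i : ℂ)) j) /
        ((∏ i, poch (d i) j) * (Nat.factorial j : ℂ))) :
    ∑' k : ℕ, poch a (k + 1) * (∏ i, poch (d i + (mv i : ℂ)) (k + 1)) /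
        (poch c (k + 1) * (∏ i, poch (d i) (k + 1)) * ((k + 1 : ℕ) : ℂ))
      = digamma c - digamma (c - a) +
        ∑ k ∈ Finset.Icc 1 m,
          (-1 : ℂ) ^ k * poch a k * (Nat.factorial (k - 1) : ℂ) * C k /
            poch (1 + a - c) k := by

  obtain ⟨Q, hQd, hQ⟩ := Entry9.exists_poly mv d hd
  rw [← hm] at hQd
  have hm1 : 1 ≤ m := by
    rw [hm]
    exact (hmv ⟨0, hr⟩).trans_le (Finset.single_le_sum (f := mv) (fun _ _ => Nat.zero_le _)
      (Finset.mem_univ _))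
  have hm1' : (1 : ℝ) ≤ m := by exact_mod_cast hm1
  have hN : ∀ n : ℕ, Q.eval (n : ℂ) = ∑ k ∈ Finset.range (m + 1), C k * (n.descFactorial k : ℂ) := by
    intro n
    rw [Entry9.newton Q hQd n]
    refine Finset.sum_congr rfl fun k hk => ?_
    rw [hC k (by simp at hk; omega)]
    congr 2
    refine Finset.sum_congr rfl fun j _ => ?_
    rw [hQ]
    field_simp
  have hC0 : C 0 = 1 := by
    rw [hC 0 (Nat.zero_le _)]
    simp [Entry9.poch_zero]
  have hT : ∀ q ∈ Finset.range m, Summable (fun k : ℕ => C (q + 1) *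
      (poch a (k + 1) / poch c (k + 1) * (k.descFactorial q : ℂ))) ∧ (q : ℝ) + 1 < (c - a).re := by
    intro q hq
    have : (q : ℝ) + 1 ≤ m := by
      have : q + 1 ≤ m := by simpa using hq
      exact_mod_cast this
    exact ⟨(Entry9.term_summable a hc q (by linarith)).mul_left _, by linarith⟩
  have hterm : ∀ k : ℕ, poch a (k + 1) * (∏ i, poch (d i + (mv i : ℂ)) (k + 1)) /
        (poch c (k + 1) * (∏ i, poch (d i) (k + 1)) * ((k + 1 : ℕ) : ℂ))
      = poch a (k + 1) / poch c (k + 1) / (k + 1) + ∑ q ∈ Finset.range m, C (q + 1) *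
        (poch a (k + 1) / poch c (k + 1) * (k.descFactorial q : ℂ)) := by
    intro k
    have e : poch a (k + 1) * (∏ i, poch (d i + (mv i : ℂ)) (k + 1)) /
        (poch c (k + 1) * (∏ i, poch (d i) (k + 1)) * ((k + 1 : ℕ) : ℂ))
        = poch a (k + 1) / poch c (k + 1) / ((k + 1 : ℕ) : ℂ) * Q.eval ((k + 1 : ℕ) : ℂ) := by
      rw [hQ]
      ring
    have hk : (k : ℂ) + 1 ≠ 0 := by exact_mod_cast Nat.succ_ne_zero k
    rw [e, hN, Finset.sum_range_succ', hC0, mul_add, Finset.mul_sum, add_comm]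
    push_cast
    congr 1
    · simp
    · refine Finset.sum_congr rfl fun q _ => ?_
      rw [Entry9.descF_succ]
      field_simp
  rw [tsum_congr hterm, Summable.tsum_add (Entry9.F_summable a hc (by linarith))
    (summable_sum fun q hq => (hT q hq).1), Summable.tsum_finsetSum fun q hq => (hT q hq).1,
    Entry9.F_eq a hc hca (by linarith)]
  congr 1
  have hI : Finset.Icc 1 m = Finset.Ico (0 + 1) (m + 1) := by
    ext x; simp
  rw [hI, ← Finset.sum_Ico_add', ← Finset.range_eq_Ico]
  refine Finset.sum_congr rfl fun q hq => ?_
  rw [tsum_mul_left, Entry9.T_eq a hc q (hT q hq).2, Nat.add_sub_cancel]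
  ring
end
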